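/- Let (X_1,…,X_r) have the GEV_r density f_r with parameters μ ∈ ℝ, σ > 0, ξ ≠ 0, and r ≥ 2, and set Y = −log σ − (1+ξ Z_r)^{−1/ξ} + (1+ξ Z_{r−1})^{−1/ξ} − (1/ξ + 1) log(1+ξ Z_r). Then E[Y²] < ∞; that is, Y is square-integrable with respect to f_r. -/

import Mathlib

open MeasureTheory ProbabilityTheory Real Filter Topology

/-- The joint density of the `r` largest order statistics limit (GEV_r) with
location `μ`, scale `σ`, and shape `ξ ≠ 0`.  The coordinates are in decreasing
order: `x 0` is `x_1` (the largest) and `x ⟨r-1,_⟩` is `x_r`. -/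
noncomputable def gevrDensity (μ σ ξ : ℝ) (r : ℕ) (x : Fin r → ℝ) : ℝ :=
  if h : 0 < r ∧ StrictAnti x ∧ (∀ j, 0 < 1 + ξ * ((x j - μ) / σ)) then
    (σ ^ r)⁻¹ * Real.exp
      (-(1 + ξ * ((x ⟨r - 1, Nat.sub_lt h.1 Nat.one_pos⟩ - μ) / σ)) ^ (-1 / ξ)
        - (1 / ξ + 1) * ∑ j, Real.log (1 + ξ * ((x j - μ) / σ)))
  else 0

/-- The GEV_r probability measure on `ℝ^r`, given by the density `gevrDensity`. -/
noncomputable def gevrMeasure (μ σ ξ : ℝ) (r : ℕ) : Measure (Fin r → ℝ) :=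
  MeasureTheory.volume.withDensity fun x => ENNReal.ofReal (gevrDensity μ σ ξ r x)

/-! The map `T x = (1 + ξ (x - μ) / σ) ^ (-1 / ξ)` is strictly decreasing on the support and
satisfies `T' = -σ⁻¹ T ^ (1 + ξ)`, so the substitution `t_j = T x_j` turns the GEV_r density into
`exp (-t_r)` on `0 < t_1 < ⋯ < t_r`. For a nonnegative decreasing `h`, the bound
`h t_r ^ r ≤ ∏ h t_j` dominates `exp (-t_r) * (exp t_r * h t_r ^ r)` by a product of one-variable
functions. With `h t = t ^ (-a / r) * exp (-(1 - b) * t / r)` this makes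
`t_r ^ (-a) * exp (b * t_r)` integrable for `0 ≤ a < r` and `b < 1`. Taking `a = b = 1 / 2`, the
variable `t_r - log t_r` has an exponential moment, hence moments of all orders, and it dominates
`t_j` and `log t_r` up to constants. -/

lemma one_le_sub_log {t : ℝ} (ht : 0 < t) : 1 ≤ t - log t := by
  linarith [log_le_sub_one_of_pos ht]

lemma two_mul_log_le_self {t : ℝ} (ht : 0 < t) : 2 * log t ≤ t := by
  have hhalf := log_le_sub_one_of_pos (half_pos ht)
  rw [log_div ht.ne' two_ne_zero] at hhalf
  linarith [log_two_lt_d9]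

lemma abs_log_le_sub_log {t : ℝ} (ht : 0 < t) : |log t| ≤ t - log t :=
  abs_le.2 ⟨by linarith, by linarith [two_mul_log_le_self ht]⟩

/-- The half-line (in `x`) on which the one-dimensional GEV distribution lives. -/
def gevSupport (μ σ ξ : ℝ) : Set ℝ :=
  {x | 0 < 1 + ξ * ((x - μ) / σ)}

/-- The GEV tail function `T x = (1 + ξ (x - μ) / σ) ^ (-1 / ξ)`, that is, minus the logarithm of
the GEV distribution function. It is meaningful on `gevSupport` only: elsewhere the base of the
power is not positive. -/
noncomputable def gevTail (μ σ ξ x : ℝ) : ℝ :=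
  (1 + ξ * ((x - μ) / σ)) ^ (-1 / ξ)

/-- The region on which the GEV_r density is positive. -/
def gevrSupport (μ σ ξ : ℝ) (r : ℕ) : Set (Fin r → ℝ) :=
  {x | StrictAnti x ∧ ∀ j, x j ∈ gevSupport μ σ ξ}

section Tail

variable {μ σ ξ : ℝ}

lemma measurableSet_gevSupport : MeasurableSet (gevSupport μ σ ξ) :=
  measurableSet_lt (by fun_prop) (by fun_prop)

@[fun_prop]
lemma measurable_gevTail : Measurable (gevTail μ σ ξ) := by
  unfold gevTail
  fun_prop

lemma gevTail_pos {x : ℝ} (hx : x ∈ gevSupport μ σ ξ) : 0 < gevTail μ σ ξ x :=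
  rpow_pos_of_pos hx _

lemma strictAntiOn_gevTail (hσ : 0 < σ) (hξ : ξ ≠ 0) :
    StrictAntiOn (gevTail μ σ ξ) (gevSupport μ σ ξ) := by
  intro x hx y hy hxy
  have hz : (x - μ) / σ < (y - μ) / σ := by gcongr
  rcases hξ.lt_or_gt with hneg | hpos
  · exact rpow_lt_rpow (le_of_lt hy) (by nlinarith) (div_pos_of_neg_of_neg (by norm_num) hneg)
  · exact rpow_lt_rpow_of_neg hx (by gcongr) (div_neg_of_neg_of_pos (by norm_num) hpos)

lemma log_eq_neg_mul_log_gevTail (hξ : ξ ≠ 0) {x : ℝ} (hx : x ∈ gevSupport μ σ ξ) :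
    log (1 + ξ * ((x - μ) / σ)) = -ξ * log (gevTail μ σ ξ x) := by
  rw [gevTail, log_rpow hx]
  field_simp

lemma gevTail_rpow_one_add (hξ : ξ ≠ 0) {x : ℝ} (hx : x ∈ gevSupport μ σ ξ) :
    gevTail μ σ ξ x ^ (1 + ξ) = (1 + ξ * ((x - μ) / σ)) ^ (-1 / ξ - 1) := by
  rw [gevTail, ← rpow_mul (le_of_lt hx)]
  congr 1
  field_simp
  ring

lemma hasDerivAt_gevTail (hξ : ξ ≠ 0) {x : ℝ} (hx : x ∈ gevSupport μ σ ξ) :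
    HasDerivAt (gevTail μ σ ξ) (-(σ⁻¹ * gevTail μ σ ξ x ^ (1 + ξ))) x := by
  have hbase : HasDerivAt (fun x => 1 + ξ * ((x - μ) / σ)) (ξ * (1 / σ)) x :=
    ((((hasDerivAt_id x).sub_const μ).div_const σ).const_mul ξ).const_add 1
  refine (hbase.rpow_const (p := -1 / ξ) (Or.inl (ne_of_gt hx))).congr_deriv ?_
  rw [gevTail_rpow_one_add hξ hx]
  field_simp

lemma integrableOn_comp_gevTail (hσ : 0 < σ) (hξ : ξ ≠ 0) {h : ℝ → ℝ}
    (hint : IntegrableOn h (Set.Ioi 0)) :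
    IntegrableOn (fun x => σ⁻¹ * gevTail μ σ ξ x ^ (1 + ξ) * h (gevTail μ σ ξ x))
      (gevSupport μ σ ξ) := by
  have himage : gevTail μ σ ξ '' gevSupport μ σ ξ ⊆ Set.Ioi 0 :=
    Set.image_subset_iff.2 fun _ => gevTail_pos
  have hsubst := (integrableOn_image_iff_integrableOn_abs_deriv_smul measurableSet_gevSupport
    (fun x hx => (hasDerivAt_gevTail hξ hx).hasDerivWithinAt)
    (strictAntiOn_gevTail hσ hξ).injOn h).1 (hint.mono_set himage)
  refine hsubst.congr_fun (fun x hx => ?_) measurableSet_gevSupport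
  have hT := gevTail_pos hx
  simp only [abs_neg, smul_eq_mul]
  rw [abs_of_pos (by positivity)]

end Tail

section Density

variable {μ σ ξ : ℝ} {n : ℕ}

lemma measurableSet_gevrSupport {r : ℕ} : MeasurableSet (gevrSupport μ σ ξ r) := by
  have hmono : MeasurableSet {x : Fin r → ℝ | StrictAnti x} := by
    simp only [StrictAnti, Set.ofPred_forall]
    exact .iInter fun i => .iInter fun j => .iInter fun _ =>
      measurableSet_lt (measurable_pi_apply j) (measurable_pi_apply i)
  have hpos : MeasurableSet {x : Fin r → ℝ | ∀ j, x j ∈ gevSupport μ σ ξ} := by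
    simp only [Set.ofPred_forall]
    exact .iInter fun j => measurable_pi_apply j measurableSet_gevSupport
  exact hmono.inter hpos

lemma gevTail_le_gevTail_last (hσ : 0 < σ) (hξ : ξ ≠ 0) {x : Fin (n + 1) → ℝ}
    (hx : x ∈ gevrSupport μ σ ξ (n + 1)) (j : Fin (n + 1)) :
    gevTail μ σ ξ (x j) ≤ gevTail μ σ ξ (x (Fin.last n)) :=
  (strictAntiOn_gevTail hσ hξ).antitoneOn (hx.2 _) (hx.2 j) (hx.1.antitone (Fin.le_last j))

lemma gevrDensity_eq_zero {r : ℕ} {x : Fin r → ℝ} (hx : x ∉ gevrSupport μ σ ξ r) :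
    gevrDensity μ σ ξ r x = 0 :=
  dif_neg fun h => hx h.2

lemma gevrDensity_eq_exp_mul_prod (hξ : ξ ≠ 0) {x : Fin (n + 1) → ℝ}
    (hx : x ∈ gevrSupport μ σ ξ (n + 1)) :
    gevrDensity μ σ ξ (n + 1) x =
      exp (-gevTail μ σ ξ (x (Fin.last n))) * ∏ j, σ⁻¹ * gevTail μ σ ξ (x j) ^ (1 + ξ) := by
  have hfactor (j : Fin (n + 1)) : gevTail μ σ ξ (x j) ^ (1 + ξ) =
      exp (-(1 / ξ + 1) * log (1 + ξ * ((x j - μ) / σ))) := by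
    rw [gevTail_rpow_one_add hξ (hx.2 j), rpow_def_of_pos (hx.2 j)]
    congr 1
    ring
  simp only [hfactor, Finset.prod_mul_distrib, ← exp_sum, ← Finset.mul_sum, Finset.prod_const,
    Finset.card_univ, Fintype.card_fin, inv_pow]
  rw [gevrDensity, dif_pos ⟨n.succ_pos, hx⟩, mul_left_comm, ← exp_add, neg_mul, ← sub_eq_add_neg]
  rfl

lemma measurable_gevrDensity : Measurable (gevrDensity μ σ ξ (n + 1)) := by
  have hdensity : gevrDensity μ σ ξ (n + 1) = (gevrSupport μ σ ξ (n + 1)).indicator fun x =>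
      (σ ^ (n + 1))⁻¹ * exp (-gevTail μ σ ξ (x (Fin.last n))
        - (1 / ξ + 1) * ∑ j, log (1 + ξ * ((x j - μ) / σ))) := by
    funext x
    by_cases hx : x ∈ gevrSupport μ σ ξ (n + 1)
    · rw [Set.indicator_of_mem hx, gevrDensity, dif_pos ⟨n.succ_pos, hx⟩]
      rfl
    · rw [Set.indicator_of_notMem hx, gevrDensity_eq_zero hx]
  rw [hdensity]
  exact Measurable.indicator (by fun_prop) measurableSet_gevrSupport

lemma gevrDensity_nonneg (hσ : 0 ≤ σ) {r : ℕ} (x : Fin r → ℝ) : 0 ≤ gevrDensity μ σ ξ r x := by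
  unfold gevrDensity
  split_ifs <;> positivity

lemma ae_mem_gevrSupport :
    ∀ᵐ x ∂gevrMeasure μ σ ξ (n + 1), x ∈ gevrSupport μ σ ξ (n + 1) := by
  rw [gevrMeasure, ae_withDensity_iff measurable_gevrDensity.ennreal_ofReal]
  refine .of_forall fun x hne => ?_
  by_contra hx
  exact hne (by rw [gevrDensity_eq_zero hx, ENNReal.ofReal_zero])

lemma integrable_gevrMeasure_iff (hσ : 0 ≤ σ) {E : Type*} [NormedAddCommGroup E] [NormedSpace ℝ E]
    {f : (Fin (n + 1) → ℝ) → E} :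
    Integrable f (gevrMeasure μ σ ξ (n + 1)) ↔
      Integrable fun x => gevrDensity μ σ ξ (n + 1) x • f x := by
  rw [gevrMeasure, integrable_withDensity_iff_integrable_smul'
    measurable_gevrDensity.ennreal_ofReal (.of_forall fun _ => ENNReal.ofReal_lt_top)]
  simp only [ENNReal.toReal_ofReal (gevrDensity_nonneg hσ _)]

end Density

section Moments

variable {μ σ ξ : ℝ} {n : ℕ}

lemma norm_gevrDensity_mul_le_prod (hσ : 0 < σ) (hξ : ξ ≠ 0) {h : ℝ → ℝ}
    (hanti : AntitoneOn h (Set.Ioi 0)) (hnonneg : ∀ t > 0, 0 ≤ h t) (x : Fin (n + 1) → ℝ) :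
    ‖gevrDensity μ σ ξ (n + 1) x * (exp (gevTail μ σ ξ (x (Fin.last n))) *
        h (gevTail μ σ ξ (x (Fin.last n))) ^ (n + 1))‖ ≤
      ∏ j, (gevSupport μ σ ξ).indicator
        (fun y => σ⁻¹ * gevTail μ σ ξ y ^ (1 + ξ) * h (gevTail μ σ ξ y)) (x j) := by
  by_cases hx : x ∈ gevrSupport μ σ ξ (n + 1)
  · have hT (j : Fin (n + 1)) : 0 < gevTail μ σ ξ (x j) := gevTail_pos (hx.2 j)
    have hh (j : Fin (n + 1)) : 0 ≤ h (gevTail μ σ ξ (x j)) := hnonneg _ (hT j)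
    have hprod : 0 ≤ ∏ j, σ⁻¹ * gevTail μ σ ξ (x j) ^ (1 + ξ) :=
      Finset.prod_nonneg fun j _ => by have := hT j; positivity
    have hpow : h (gevTail μ σ ξ (x (Fin.last n))) ^ (n + 1) ≤ ∏ j, h (gevTail μ σ ξ (x j)) := by
      rw [← Fin.prod_const]
      exact Finset.prod_le_prod (fun _ _ => hh _) fun j _ =>
        hanti (hT j) (hT _) (gevTail_le_gevTail_last hσ hξ hx j)
    have hcancel : gevrDensity μ σ ξ (n + 1) x * (exp (gevTail μ σ ξ (x (Fin.last n))) *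
        h (gevTail μ σ ξ (x (Fin.last n))) ^ (n + 1)) =
        (∏ j, σ⁻¹ * gevTail μ σ ξ (x j) ^ (1 + ξ)) *
          h (gevTail μ σ ξ (x (Fin.last n))) ^ (n + 1) := by
      rw [gevrDensity_eq_exp_mul_prod hξ hx, exp_neg]
      field_simp
    simp only [Set.indicator_of_mem (hx.2 _)]
    rw [hcancel, norm_of_nonneg (mul_nonneg hprod (pow_nonneg (hh _) _))]
    exact (mul_le_mul_of_nonneg_left hpow hprod).trans_eq Finset.prod_mul_distrib.symm
  · rw [gevrDensity_eq_zero hx, zero_mul, norm_zero]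
    refine Finset.prod_nonneg fun j _ => Set.indicator_nonneg (fun y hy => ?_) _
    have hy := gevTail_pos hy
    have := hnonneg _ hy
    positivity

lemma integrable_exp_gevTail_mul_pow (hσ : 0 < σ) (hξ : ξ ≠ 0) {h : ℝ → ℝ} (hmeas : Measurable h)
    (hanti : AntitoneOn h (Set.Ioi 0)) (hnonneg : ∀ t > 0, 0 ≤ h t)
    (hint : IntegrableOn h (Set.Ioi 0)) :
    Integrable (fun x => exp (gevTail μ σ ξ (x (Fin.last n))) *
      h (gevTail μ σ ξ (x (Fin.last n))) ^ (n + 1)) (gevrMeasure μ σ ξ (n + 1)) := by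
  have hdensity := measurable_gevrDensity (μ := μ) (σ := σ) (ξ := ξ) (n := n)
  have hdom : Integrable fun x : Fin (n + 1) → ℝ => ∏ j, (gevSupport μ σ ξ).indicator
      (fun y => σ⁻¹ * gevTail μ σ ξ y ^ (1 + ξ) * h (gevTail μ σ ξ y)) (x j) :=
    Integrable.fintype_prod (f := fun _ => (gevSupport μ σ ξ).indicator _) fun _ =>
      (integrableOn_comp_gevTail hσ hξ hint).integrable_indicator measurableSet_gevSupport
  rw [integrable_gevrMeasure_iff hσ.le]
  exact hdom.mono' (Measurable.aestronglyMeasurable (by fun_prop))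
    (.of_forall (norm_gevrDensity_mul_le_prod hσ hξ hanti hnonneg))

lemma integrable_gevTail_rpow_mul_exp (hσ : 0 < σ) (hξ : ξ ≠ 0) {a b : ℝ} (ha : 0 ≤ a)
    (han : a < n + 1) (hb : b < 1) :
    Integrable (fun x => gevTail μ σ ξ (x (Fin.last n)) ^ (-a) *
      exp (b * gevTail μ σ ξ (x (Fin.last n)))) (gevrMeasure μ σ ξ (n + 1)) := by
  set s : ℝ := -(a / (n + 1)) with hs
  set c : ℝ := (1 - b) / (n + 1) with hc
  have hs_nonpos : s ≤ 0 := neg_nonpos.2 (by positivity)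
  have hs_gt : -1 < s := neg_lt_neg ((div_lt_one (by positivity)).2 han)
  have hc_pos : 0 < c := div_pos (by linarith) (by positivity)
  have hanti : AntitoneOn (fun t : ℝ => t ^ s * exp (-c * t)) (Set.Ioi 0) := by
    intro t ht u _ htu
    exact mul_le_mul (rpow_le_rpow_of_nonpos ht htu hs_nonpos) (exp_le_exp.2 (by nlinarith))
      (exp_pos _).le (rpow_nonneg (le_of_lt ht) _)
  have hint : IntegrableOn (fun t : ℝ => t ^ s * exp (-c * t)) (Set.Ioi 0) := by
    simpa only [rpow_one] using integrableOn_rpow_mul_exp_neg_mul_rpow hs_gt one_pos hc_pos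
  refine (integrable_exp_gevTail_mul_pow hσ hξ (by fun_prop) hanti
    (fun t ht => by positivity) hint).congr ?_
  filter_upwards [ae_mem_gevrSupport] with x hx
  have hT := gevTail_pos (hx.2 (Fin.last n))
  rw [mul_pow, ← rpow_mul_natCast hT.le, ← exp_nat_mul, mul_left_comm, ← exp_add, hs, hc]
  push_cast
  congr 2 <;> field_simp
  ring

lemma memLp_gevTail_sub_log (hσ : 0 < σ) (hξ : ξ ≠ 0) {p : ENNReal} (hp : p ≠ ⊤) :
    MemLp (fun x => gevTail μ σ ξ (x (Fin.last n)) - log (gevTail μ σ ξ (x (Fin.last n)))) p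
      (gevrMeasure μ σ ξ (n + 1)) := by
  lift p to NNReal using hp
  refine memLp_of_mem_interior_integrableExpSet (mem_interior_iff_mem_nhds.2 ?_) p
  have han : (1 / 2 : ℝ) < n + 1 := by linarith [n.cast_nonneg (α := ℝ)]
  have hhalf := integrable_gevTail_rpow_mul_exp (μ := μ) (n := n) hσ hξ one_half_pos.le han
    one_half_lt_one
  filter_upwards [Iio_mem_nhds (one_half_pos (α := ℝ))] with t ht
  refine hhalf.mono' (Measurable.aestronglyMeasurable (by fun_prop)) ?_
  filter_upwards [ae_mem_gevrSupport] with x hx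
  have hT := gevTail_pos (hx.2 (Fin.last n))
  rw [norm_of_nonneg (exp_pos _).le, rpow_def_of_pos hT, ← exp_add, exp_le_exp]
  nlinarith [one_le_sub_log hT, Set.mem_Iio.1 ht]

lemma memLp_gevTail (hσ : 0 < σ) (hξ : ξ ≠ 0) (j : Fin (n + 1)) {p : ENNReal} (hp : p ≠ ⊤) :
    MemLp (fun x => gevTail μ σ ξ (x j)) p (gevrMeasure μ σ ξ (n + 1)) := by
  refine (memLp_gevTail_sub_log hσ hξ hp).of_le_mul (c := 2)
    (Measurable.aestronglyMeasurable (by fun_prop)) ?_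
  filter_upwards [ae_mem_gevrSupport] with x hx
  have hT := gevTail_pos (hx.2 (Fin.last n))
  rw [norm_of_nonneg (gevTail_pos (hx.2 j)).le]
  calc gevTail μ σ ξ (x j) ≤ gevTail μ σ ξ (x (Fin.last n)) := gevTail_le_gevTail_last hσ hξ hx j
    _ ≤ 2 * (gevTail μ σ ξ (x (Fin.last n)) - log (gevTail μ σ ξ (x (Fin.last n)))) :=
      by linarith [two_mul_log_le_self hT]
    _ ≤ _ := by gcongr; exact le_norm_self _

lemma memLp_log_gevTail_last (hσ : 0 < σ) (hξ : ξ ≠ 0) {p : ENNReal} (hp : p ≠ ⊤) :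
    MemLp (fun x => log (gevTail μ σ ξ (x (Fin.last n)))) p (gevrMeasure μ σ ξ (n + 1)) := by
  refine (memLp_gevTail_sub_log hσ hξ hp).mono (Measurable.aestronglyMeasurable (by fun_prop)) ?_
  filter_upwards [ae_mem_gevrSupport] with x hx
  exact (abs_log_le_sub_log (gevTail_pos (hx.2 (Fin.last n)))).trans (le_norm_self _)

lemma isFiniteMeasure_gevrMeasure (hσ : 0 < σ) (hξ : ξ ≠ 0) :
    IsFiniteMeasure (gevrMeasure μ σ ξ (n + 1)) := by
  have hone := integrable_gevTail_rpow_mul_exp (μ := μ) (n := n) hσ hξ le_rfl (by positivity)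
    zero_lt_one
  refine (integrable_const_iff_isFiniteMeasure (one_ne_zero (α := ℝ))).1 ?_
  simpa only [neg_zero, rpow_zero, zero_mul, exp_zero, mul_one] using hone

end Moments

theorem entropy_difference_square_integrable_general {μ σ ξ : ℝ} (hσ : 0 < σ) (hξ : ξ ≠ 0) {n : ℕ}
    (i : Fin (n + 1)) {p : ENNReal} (hp : p ≠ ⊤) :
    MemLp
      (fun x : Fin (n + 1) → ℝ =>
        -log σ
          - (1 + ξ * ((x (Fin.last n) - μ) / σ)) ^ (-1 / ξ)
          + (1 + ξ * ((x i - μ) / σ)) ^ (-1 / ξ)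
          - (1 / ξ + 1) * log (1 + ξ * ((x (Fin.last n) - μ) / σ)))
      p (gevrMeasure μ σ ξ (n + 1)) := by
  have hfin := isFiniteMeasure_gevrMeasure (μ := μ) (n := n) hσ hξ
  have hlog : MemLp (fun x : Fin (n + 1) → ℝ => log (1 + ξ * ((x (Fin.last n) - μ) / σ))) p
      (gevrMeasure μ σ ξ (n + 1)) := by
    refine ((memLp_log_gevTail_last hσ hξ hp).const_mul (-ξ)).ae_eq ?_
    filter_upwards [ae_mem_gevrSupport] with x hx
    exact (log_eq_neg_mul_log_gevTail hξ (hx.2 _)).symm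
  exact (((memLp_const (-log σ)).sub (memLp_gevTail hσ hξ (Fin.last n) hp)).add
    (memLp_gevTail hσ hξ i hp)).sub (hlog.const_mul (1 / ξ + 1))

/-- the entropy difference
`Y = −log σ − (1+ξZ_r)^{−1/ξ} + (1+ξZ_{r−1})^{−1/ξ} − (1/ξ+1) log(1+ξZ_r)`
is square-integrable under the GEV_r distribution, i.e. `E[Y²] < ∞`. -/
theorem entropy_difference_square_integrable
    (μ σ ξ : ℝ) (hσ : 0 < σ) (hξ : ξ ≠ 0) (r : ℕ) (hr : 2 ≤ r) :
    MeasureTheory.Integrable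
      (fun x : Fin r → ℝ =>
        (-Real.log σ
          - (1 + ξ * ((x ⟨r - 1, by omega⟩ - μ) / σ)) ^ (-1 / ξ)
          + (1 + ξ * ((x ⟨r - 2, by omega⟩ - μ) / σ)) ^ (-1 / ξ)
          - (1 / ξ + 1) * Real.log (1 + ξ * ((x ⟨r - 1, by omega⟩ - μ) / σ))) ^ 2)
      (gevrMeasure μ σ ξ r) := by
  obtain ⟨n, rfl⟩ : ∃ n, r = n + 1 := ⟨r - 1, by omega⟩
  exact (entropy_difference_square_integrable_general hσ hξ ⟨n - 1, by omega⟩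
    ENNReal.ofNat_ne_top).integrable_sq
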